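/- Let (X, d, T) be a topological dynamical system and let U be a finite open cover of X. Then for every δ ∈ (0,1), the topological entropy of the cover satisfies h_top(U,T) = sup_{μ ∈ E_T(X)} h_μ^S(U, δ). -/

import Mathlib

open Filter MeasureTheory Set Topology

variable {X : Type*}

/-- The dynamical (Bowen) metric `d_n(x,y) = max_{0 ≤ k ≤ n-1} d(T^k x, T^k y)`. -/
noncomputable def dynDist [MetricSpace X] (T : X → X) (n : ℕ) (x y : X) : ℝ :=
  ⨆ k ∈ Finset.range n, dist (T^[k] x) (T^[k] y)

/-- The open dynamical ball `B_n(x, ε) = {y : d_n(x,y) < ε}`. -/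
def dynBall [MetricSpace X] (T : X → X) (n : ℕ) (x : X) (ε : ℝ) : Set X :=
  {y | dynDist T n x y < ε}

/-- `s_n(K, ε)`: the maximal cardinality of an `(n,ε)`-separated subset of `K`. -/
noncomputable def sepNum [MetricSpace X] (T : X → X) (n : ℕ) (K : Set X) (ε : ℝ) : ℕ :=
  sSup {m | ∃ E : Finset X, ↑E ⊆ K ∧
    (∀ x ∈ E, ∀ y ∈ E, x ≠ y → ε < dynDist T n x y) ∧ E.card = m}

/-- `S(K, ε) = limsup_n (1/n) log s_n(K, ε)`. -/
noncomputable def sepEnt [MetricSpace X] (T : X → X) (K : Set X) (ε : ℝ) : EReal :=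
  limsup (fun n : ℕ => ((Real.log (sepNum T n K ε) / n : ℝ) : EReal)) atTop

/-- `r_n(K, ε)`: the minimal cardinality of an `(n,ε)`-spanning set for `K`. -/
noncomputable def spanNum [MetricSpace X] (T : X → X) (n : ℕ) (K : Set X) (ε : ℝ) : ℕ :=
  sInf {m | ∃ F : Finset X, (∀ x ∈ K, ∃ y ∈ F, dynDist T n x y ≤ ε) ∧ F.card = m}

/-- `R(K, ε) = limsup_n (1/n) log r_n(K, ε)`. -/
noncomputable def spanEnt [MetricSpace X] (T : X → X) (K : Set X) (ε : ℝ) : EReal :=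
  limsup (fun n : ℕ => ((Real.log (spanNum T n K ε) / n : ℝ) : EReal)) atTop

/-- Upper metric mean dimension. -/
noncomputable def mdimUpper [MetricSpace X] (T : X → X) : EReal :=
  limsup (fun ε : ℝ => sepEnt T univ ε / ((Real.log (1 / ε) : ℝ) : EReal)) (𝓝[>] (0:ℝ))

/-- Lower metric mean dimension. -/
noncomputable def mdimLower [MetricSpace X] (T : X → X) : EReal :=
  liminf (fun ε : ℝ => sepEnt T univ ε / ((Real.log (1 / ε) : ℝ) : EReal)) (𝓝[>] (0:ℝ))

/-- The ergodic `T`-invariant Borel probability measures. -/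
def ergodicMeasures [MeasurableSpace X] (T : X → X) : Set (Measure X) :=
  {μ | IsProbabilityMeasure μ ∧ Ergodic T μ}

/-- `U` is a finite open cover of `X`. -/
def IsFiniteOpenCover [TopologicalSpace X] (U : Finset (Set X)) : Prop :=
  (∀ V ∈ U, IsOpen V) ∧ ⋃₀ (U : Set (Set X)) = univ

/-- The cover `U^n = ⋁_{i=0}^{n-1} T^{-i} U`. -/
def dynRefine (T : X → X) (U : Finset (Set X)) (n : ℕ) : Set (Set X) :=
  {V | ∃ f : Fin n → Set X, (∀ i, f i ∈ U) ∧ V = ⋂ i : Fin n, T^[(i : ℕ)] ⁻¹' f i}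

/-- `N(C)`: the minimal cardinality of a subcover of `C`. -/
noncomputable def coverNum (C : Set (Set X)) : ℕ :=
  sInf {m | ∃ F : Finset (Set X), ↑F ⊆ C ∧ ⋃₀ (F : Set (Set X)) = univ ∧ F.card = m}

/-- `N_μ(U^n, δ)`: minimal number of members of `U^n` needed to cover a set of measure ≥ δ. -/
noncomputable def shapiraNum [MeasurableSpace X] (T : X → X) (μ : Measure X)
    (U : Finset (Set X)) (n : ℕ) (δ : ℝ) : ℕ :=
  sInf {m | ∃ F : Finset (Set X), ↑F ⊆ dynRefine T U n ∧
    ENNReal.ofReal δ ≤ μ (⋃₀ (F : Set (Set X))) ∧ F.card = m}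

/-- Shapira's entropy `h_μ^S(U, δ) = limsup_n (1/n) log N_μ(U^n, δ)`. -/
noncomputable def shapiraEnt [MeasurableSpace X] (T : X → X) (μ : Measure X)
    (U : Finset (Set X)) (δ : ℝ) : EReal :=
  limsup (fun n : ℕ => ((Real.log (shapiraNum T μ U n δ) / n : ℝ) : EReal)) atTop

/-- `N_μ^δ(n, ε)`: smallest number of open `(n,ε)`-dynamical balls whose union has
measure `> δ`. -/
noncomputable def katokNum [MetricSpace X] [MeasurableSpace X] (T : X → X) (μ : Measure X)
    (n : ℕ) (ε δ : ℝ) : ℕ :=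
  sInf {m | ∃ F : Finset X, ENNReal.ofReal δ < μ (⋃ x ∈ F, dynBall T n x ε) ∧ F.card = m}

/-- Katok's entropy `h_μ^K(ε, δ) = limsup_n (1/n) log N_μ^δ(n, ε)`. -/
noncomputable def katokEnt [MetricSpace X] [MeasurableSpace X] (T : X → X) (μ : Measure X)
    (ε δ : ℝ) : EReal :=
  limsup (fun n : ℕ => ((Real.log (katokNum T μ n ε δ) / n : ℝ) : EReal)) atTop

/-- Lower Katok entropy `h̲_μ^K(ε, δ) = liminf_n (1/n) log N_μ^δ(n, ε)`. -/
noncomputable def katokEntLower [MetricSpace X] [MeasurableSpace X] (T : X → X) (μ : Measure X)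
    (ε δ : ℝ) : EReal :=
  liminf (fun n : ℕ => ((Real.log (katokNum T μ n ε δ) / n : ℝ) : EReal)) atTop

/-- `Ñ_μ^δ(n, ε)`: smallest number of sets of `d_n`-diameter ≤ ε whose union has
measure `> δ`. -/
noncomputable def katokNumTilde [MetricSpace X] [MeasurableSpace X] (T : X → X) (μ : Measure X)
    (n : ℕ) (ε δ : ℝ) : ℕ :=
  sInf {m | ∃ F : Finset (Set X), (∀ A ∈ F, ∀ x ∈ A, ∀ y ∈ A, dynDist T n x y ≤ ε) ∧
    ENNReal.ofReal δ < μ (⋃₀ (F : Set (Set X))) ∧ F.card = m}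

/-- Brin–Katok local entropy `h_μ^{BK}(x, ε) = limsup_n -(1/n) log μ(B_n(x, ε))`. -/
noncomputable def brinKatok [MetricSpace X] [MeasurableSpace X] (T : X → X) (μ : Measure X)
    (x : X) (ε : ℝ) : EReal :=
  limsup (fun n : ℕ => -(ENNReal.log (μ (dynBall T n x ε))) / (n : EReal)) atTop

/-- Lower Brin–Katok local entropy `h̲_μ^{BK}(x, ε) = liminf_n -(1/n) log μ(B_n(x, ε))`. -/
noncomputable def brinKatokLower [MetricSpace X] [MeasurableSpace X] (T : X → X) (μ : Measure X)
    (x : X) (ε : ℝ) : EReal :=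
  liminf (fun n : ℕ => -(ENNReal.log (μ (dynBall T n x ε))) / (n : EReal)) atTop

/-- Local entropy function `h_d(x, ε) = inf { S(K, ε) : K closed neighborhood of x }`. -/
noncomputable def locEnt [MetricSpace X] (T : X → X) (x : X) (ε : ℝ) : EReal :=
  ⨅ K ∈ {K : Set X | IsClosed K ∧ K ∈ 𝓝 x}, sepEnt T K ε

/-- Local spanning entropy `h̃_d(x, ε) = inf { R(K, ε) : K closed neighborhood of x }`. -/
noncomputable def locSpanEnt [MetricSpace X] (T : X → X) (x : X) (ε : ℝ) : EReal :=
  ⨅ K ∈ {K : Set X | IsClosed K ∧ K ∈ 𝓝 x}, spanEnt T K ε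

/-- `U_x^n`: the union of all cells of `U^n` containing `x`. -/
def dynCoverCell (T : X → X) (U : Finset (Set X)) (n : ℕ) (x : X) : Set X :=
  ⋃₀ {V | V ∈ dynRefine T U n ∧ x ∈ V}

namespace ShapiraAux

/-- The cell of a word over the alphabet `U`. -/
def cell (T : X → X) {U : Finset (Set X)} : List U → Set X
  | [] => univ
  | V :: w => (V : Set X) ∩ T ⁻¹' cell T w

/-- The union of the cells of a set of words. -/
def cellU (T : X → X) {U : Finset (Set X)} (G : Set (List U)) : Set X :=
  ⋃ w ∈ G, cell T w

lemma cell_append (T : X → X) {U : Finset (Set X)} (w v : List U) :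
    cell T (w ++ v) = cell T w ∩ T^[w.length] ⁻¹' cell T v := by
  induction w with
  | nil => simp [cell]
  | cons a w ih =>
    simp only [List.cons_append, cell, ih, List.length_cons, Function.iterate_succ,
      preimage_inter, inter_assoc, preimage_comp]

lemma cell_take (T : X → X) {U : Finset (Set X)} (w : List U) (n : ℕ) :
    cell T w ⊆ cell T (w.take n) := by
  conv_lhs => rw [← List.take_append_drop n w, cell_append]
  exact inter_subset_left

lemma mem_cell_iff (T : X → X) {U : Finset (Set X)} (w : List U) (x : X) :
    x ∈ cell T w ↔ ∀ i (h : i < w.length), T^[i] x ∈ (w[i] : Set X) := by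
  induction w generalizing x with
  | nil => simp [cell]
  | cons a w ih =>
    simp only [cell, mem_inter_iff, mem_preimage, ih, List.length_cons]
    constructor
    · rintro ⟨h1, h2⟩ i hi
      cases i with
      | zero => simpa using h1
      | succ i => simpa using h2 i (by omega)
    · intro h
      refine ⟨by simpa using h 0 (by omega), fun i hi => ?_⟩
      exact h (i+1) (by omega)

lemma isOpen_cell [TopologicalSpace X] {T : X → X} (hT : Continuous T) {U : Finset (Set X)}
    (hU : ∀ V ∈ U, IsOpen V) (w : List U) : IsOpen (cell T w) := by
  induction w with
  | nil => exact isOpen_univ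
  | cons a w ih => exact (hU a a.2).inter (ih.preimage hT)

lemma isOpen_cellU [TopologicalSpace X] {T : X → X} (hT : Continuous T) {U : Finset (Set X)}
    (hU : ∀ V ∈ U, IsOpen V) (G : Set (List U)) : IsOpen (cellU T G) :=
  isOpen_biUnion fun w _ => isOpen_cell hT hU w

lemma cell_mem_dynRefine (T : X → X) {U : Finset (Set X)} (w : List U) :
    cell T w ∈ dynRefine T U w.length := by
  refine ⟨fun i => (w[i] : Set X), fun i => (w[i]).2, ?_⟩
  ext x
  rw [mem_cell_iff]
  simp only [mem_iInter, mem_preimage]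
  exact ⟨fun h i => h i i.2, fun h i hi => h ⟨i, hi⟩⟩

lemma exists_word {T : X → X} {U : Finset (Set X)} {n : ℕ} {V : Set X}
    (hV : V ∈ dynRefine T U n) : ∃ w : List U, w.length = n ∧ cell T w = V := by
  obtain ⟨f, hf, rfl⟩ := hV
  refine ⟨List.ofFn fun i => (⟨f i, hf i⟩ : U), by simp, ?_⟩
  ext x
  rw [mem_cell_iff]
  simp only [mem_iInter, mem_preimage, List.length_ofFn, List.getElem_ofFn]
  exact ⟨fun h i => h i i.2, fun h i hi => h ⟨i, hi⟩⟩

lemma cellU_mono (T : X → X) {U : Finset (Set X)} {G H : Set (List U)} (h : G ⊆ H) :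
    cellU T G ⊆ cellU T H := biUnion_subset_biUnion_left h

/-- Number of times `i < n` at which the orbit of `x` is outside `W`. -/
noncomputable def cnt (T : X → X) (W : Set X) (n : ℕ) (x : X) : ℕ :=
  ∑ i ∈ Finset.range n, Wᶜ.indicator (fun _ => 1) (T^[i] x)

lemma cnt_shift (T : X → X) (W : Set X) (n m : ℕ) (x : X) :
    cnt T W n (T^[m] x) ≤ cnt T W (m + n) x := by
  unfold cnt
  rw [Finset.sum_range_add]
  simp only [← Function.iterate_add_apply]
  refine le_trans (le_of_eq ?_) (Nat.le_add_left _ _)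
  exact Finset.sum_congr rfl fun i _ => by rw [add_comm m]

lemma cnt_succ (T : X → X) (W : Set X) (n : ℕ) (x : X) (hx : x ∉ W) :
    cnt T W (n + 1) x = cnt T W n (T x) + 1 := by
  unfold cnt
  rw [Finset.sum_range_succ']
  simp [hx]

lemma cover_letter {U : Finset (Set X)} (hU : ⋃₀ (U : Set (Set X)) = univ) (x : X) :
    ∃ u : U, x ∈ (u : Set X) := by
  have : x ∈ ⋃₀ (U : Set (Set X)) := hU ▸ mem_univ x
  obtain ⟨V, hV, hx⟩ := this
  exact ⟨⟨V, hV⟩, hx⟩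

open Classical in
/-- Counting lemma: points whose orbit is mostly in the union of a cheap finite family. -/
lemma count_cover (T : X → X) {U : Finset (Set X)} (hU : ⋃₀ (U : Set (Set X)) = univ)
    (hne : U.Nonempty) (s : ℝ) (hs : 0 ≤ s) (g : Finset (List U))
    (hg : ∑ w ∈ g, Real.exp (-s * w.length) ≤ 1 / 2) (n : ℕ) :
    ∀ k : ℕ, ∃ S : Finset (List U), (∀ w ∈ S, w.length = n) ∧
      {x | cnt T (cellU T (g : Set (List U))) n x ≤ k} ⊆ cellU T (S : Set (List U)) ∧
      (S.card : ℝ) ≤ (4 * g.card + 1) * Real.exp (s * n) * (4 * U.card) ^ k := by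
  set A : ℝ := 4 * g.card + 1 with hA
  set L : ℝ := 4 * U.card with hL
  have hU1 : (1:ℝ) ≤ U.card := by exact_mod_cast hne.card_pos
  have hL1 : 1 ≤ L := by rw [hL]; linarith
  have hA1 : 1 ≤ A := by rw [hA]; have : (0:ℝ) ≤ g.card := by positivity
                         linarith
  have hpos : ∀ w ∈ g, 0 < w.length := by
    intro w hw
    by_contra h
    have h0 : w.length = 0 := by omega
    have := Finset.single_le_sum (f := fun w : List U => Real.exp (-s * w.length))
      (fun i _ => (Real.exp_pos _).le) hw
    simp only [h0] at this
    norm_num at this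
    norm_num at hg
    linarith
  induction n using Nat.strong_induction_on with
  | _ n ih =>
  intro k
  rcases Nat.eq_zero_or_pos n with rfl | hn
  · refine ⟨{[]}, by simp, by simp [cellU, cell], ?_⟩
    simp only [Finset.card_singleton, Nat.cast_one, Nat.cast_zero, mul_zero, Real.exp_zero, mul_one]
    calc (1:ℝ) = 1 * 1 := by ring
      _ ≤ A * L ^ k := mul_le_mul hA1 (one_le_pow₀ hL1) zero_le_one (by linarith)
  choose! S hS1 hS2 hS3 using ih
  let P : List U → Finset (List U) := fun w =>
    if w.length < n then (S (n - w.length) k).image (w ++ ·) else {w.take n}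
  let Q : Finset (List U) := if k = 0 then ∅ else
    Finset.univ.biUnion fun u : U => (S (n - 1) (k - 1)).image (u :: ·)
  refine ⟨g.biUnion P ∪ Q, ?_, ?_, ?_⟩
  · intro w hw
    rw [Finset.mem_union, Finset.mem_biUnion] at hw
    rcases hw with ⟨v, hv, hw⟩ | hw
    · simp only [P] at hw
      split_ifs at hw with h
      · obtain ⟨v', hv', rfl⟩ := Finset.mem_image.1 hw
        have := hS1 (n - v.length) (by have := hpos v hv; omega) k v' hv'
        simp [this]; omega
      · rw [Finset.mem_singleton] at hw
        subst hw
        simp; omega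
    · simp only [Q] at hw
      split_ifs at hw with h
      · simp at hw
      · obtain ⟨u, _, hw⟩ := Finset.mem_biUnion.1 hw
        obtain ⟨v', hv', rfl⟩ := Finset.mem_image.1 hw
        have := hS1 (n - 1) (by omega) (k - 1) v' hv'
        simp [this]; omega
  · intro x hx
    simp only [mem_ofPred_eq] at hx
    simp only [cellU, mem_iUnion, Finset.mem_coe, Finset.mem_union, Finset.mem_biUnion]
    by_cases hxW : x ∈ cellU T (g : Set (List U))
    · simp only [cellU, mem_iUnion, Finset.mem_coe] at hxW
      obtain ⟨w, hw, hxw⟩ := hxW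
      by_cases hlt : w.length < n
      · have h1 : cnt T (cellU T (g : Set (List U))) (n - w.length) (T^[w.length] x) ≤ k := by
          refine (cnt_shift _ _ _ _ _).trans ?_
          rwa [Nat.add_sub_cancel' hlt.le]
        have h2 := hS2 (n - w.length) (by have := hpos w hw; omega) k h1
        simp only [cellU, mem_iUnion, Finset.mem_coe] at h2
        obtain ⟨v, hv, hxv⟩ := h2
        refine ⟨w ++ v, Or.inl ⟨w, hw, ?_⟩, ?_⟩
        · simp only [P, if_pos hlt]
          exact Finset.mem_image_of_mem _ hv
        · rw [cell_append]; exact ⟨hxw, hxv⟩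
      · refine ⟨w.take n, Or.inl ⟨w, hw, ?_⟩, cell_take T w n hxw⟩
        simp only [P, if_neg hlt, Finset.mem_singleton]
    · obtain ⟨m, rfl⟩ : ∃ m, n = m + 1 := ⟨n - 1, by omega⟩
      rw [cnt_succ _ _ _ _ hxW] at hx
      have hk : k ≠ 0 := by omega
      have h2 := hS2 m (by omega) (k - 1) (show cnt T _ m (T x) ≤ k - 1 by omega)
      simp only [cellU, mem_iUnion, Finset.mem_coe] at h2
      obtain ⟨v, hv, hxv⟩ := h2
      obtain ⟨u, hu⟩ := cover_letter hU x
      refine ⟨u :: v, Or.inr ?_, ⟨hu, hxv⟩⟩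
      simp only [Q, if_neg hk, Finset.mem_biUnion, Finset.mem_univ, true_and]
      exact ⟨u, Finset.mem_image_of_mem _ (by simpa using hv)⟩
  · have hE : 0 < A * Real.exp (s * n) * L ^ k := by positivity
    have hE1 : A ≤ A * Real.exp (s * n) * L ^ k := by
      have h1 : 1 ≤ Real.exp (s * n) := Real.one_le_exp (by positivity)
      have h2 : 1 ≤ L ^ k := one_le_pow₀ hL1
      calc A = A * 1 * 1 := by ring
        _ ≤ _ := by gcongr
    set E := A * Real.exp (s * n) * L ^ k with hEdef
    have hPc : ∀ w ∈ g, ((P w).card : ℝ) ≤ Real.exp (-s * w.length) * E + 1 := by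
      intro w hw
      simp only [P]
      split_ifs with h
      · have h3 := hS3 (n - w.length) (by have := hpos w hw; omega) k
        have h4 : ((S (n - w.length) k).image (w ++ ·)).card ≤ (S (n - w.length) k).card :=
          Finset.card_image_le
        have h5 : (((S (n - w.length) k).image (w ++ ·)).card : ℝ) ≤ (S (n - w.length) k).card := by
          exact_mod_cast h4
        have h6 : A * Real.exp (s * ((n - w.length : ℕ) : ℝ)) * L ^ k
            = Real.exp (-s * w.length) * E := by
          rw [hEdef, Nat.cast_sub h.le]
          have : s * ((n:ℝ) - w.length) = -s * w.length + s * n := by ring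
          rw [this, Real.exp_add]; ring
        linarith
      · simp only [Finset.card_singleton, Nat.cast_one]
        have : 0 ≤ Real.exp (-s * w.length) * E := by positivity
        linarith
    have hQc : (Q.card : ℝ) ≤ E / 4 := by
      simp only [Q]
      split_ifs with h
      · simp; positivity
      · obtain ⟨j, rfl⟩ : ∃ j, k = j + 1 := ⟨k - 1, by omega⟩
        have h1 : (Finset.univ.biUnion fun u : U => (S (n - 1) (j + 1 - 1)).image (u :: ·)).card
            ≤ U.card * (S (n - 1) (j + 1 - 1)).card := by
          refine Finset.card_biUnion_le.trans ?_
          refine (Finset.sum_le_card_nsmul _ _ _ fun u _ => Finset.card_image_le).trans ?_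
          simp
        have h2 := hS3 (n - 1) (by omega) (j + 1 - 1)
        have h3 : Real.exp (s * ((n - 1 : ℕ) : ℝ)) ≤ Real.exp (s * n) := by
          apply Real.exp_le_exp.2
          gcongr
          omega
        calc ((Finset.univ.biUnion fun u : U => (S (n - 1) (j + 1 - 1)).image (u :: ·)).card : ℝ)
            ≤ U.card * (S (n - 1) (j + 1 - 1)).card := by exact_mod_cast h1
          _ ≤ U.card * (A * Real.exp (s * n) * L ^ (j + 1 - 1)) := by
            gcongr
            refine h2.trans ?_
            gcongr
          _ = E / 4 := by
            rw [hEdef, hL]; simp only [Nat.add_sub_cancel]; ring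
    have hc : ((g.biUnion P ∪ Q).card : ℝ) ≤ ∑ w ∈ g, ((P w).card : ℝ) + Q.card := by
      have := (Finset.card_union_le (g.biUnion P) Q).trans
        (Nat.add_le_add_right (Finset.card_biUnion_le (s := g) (t := P)) _)
      exact_mod_cast this
    have hsum : ∑ w ∈ g, ((P w).card : ℝ) ≤ E / 2 + g.card := by
      calc ∑ w ∈ g, ((P w).card : ℝ) ≤ ∑ w ∈ g, (Real.exp (-s * w.length) * E + 1) :=
            Finset.sum_le_sum hPc
        _ = (∑ w ∈ g, Real.exp (-s * w.length)) * E + g.card := by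
          rw [Finset.sum_add_distrib, Finset.sum_mul]; simp
        _ ≤ 1 / 2 * E + g.card := by gcongr
        _ = _ := by ring
    have hgA : (g.card : ℝ) ≤ E / 4 := by
      have : (g.card : ℝ) ≤ A / 4 := by rw [hA]; linarith
      linarith
    linarith

/-- The price of a word. -/
noncomputable def price {U : Finset (Set X)} (s : ℝ) (w : List U) : ENNReal :=
  ENNReal.ofReal (Real.exp (-s * w.length))

/-- Sets which can be covered by cells of arbitrarily small total price. -/
def Null (T : X → X) (U : Finset (Set X)) (s : ℝ) (Z : Set X) : Prop :=
  ∀ η : ENNReal, η ≠ 0 → ∃ G : Set (List U), Z ⊆ cellU T G ∧ ∑' w : G, price s (w : List U) ≤ η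

lemma null_iUnion {T : X → X} {U : Finset (Set X)} {s : ℝ} {ι : Type*} [Countable ι]
    {Z : ι → Set X} (h : ∀ i, Null T U s (Z i)) : Null T U s (⋃ i, Z i) := by
  intro η hη
  obtain ⟨η', hpos, hsum⟩ := ENNReal.exists_pos_sum_of_countable' hη ι
  choose G hG1 hG2 using fun i => h i (η' i) (hpos i).ne'
  refine ⟨⋃ i, G i, ?_, ?_⟩
  · refine iUnion_subset fun i => (hG1 i).trans (cellU_mono T (subset_iUnion G i))
  · refine (ENNReal.tsum_iUnion_le_tsum (price s) G).trans ?_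
    exact (ENNReal.tsum_le_tsum hG2).trans hsum.le

lemma null_preimage {T : X → X} {U : Finset (Set X)} (hU : ⋃₀ (U : Set (Set X)) = univ)
    {s : ℝ} (hs : 0 ≤ s) {Z : Set X} (h : Null T U s Z) : Null T U s (T ⁻¹' Z) := by
  intro η hη
  obtain ⟨G, hG1, hG2⟩ := h (η / (U.card + 1)) (by
    simp only [ne_eq, ENNReal.div_eq_zero_iff, hη, false_or]
    exact ENNReal.add_ne_top.2 ⟨ENNReal.natCast_ne_top _, ENNReal.one_ne_top⟩)
  refine ⟨⋃ u : U, (fun w => u :: w) '' G, ?_, ?_⟩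
  · intro x hx
    have := hG1 hx
    simp only [cellU, mem_iUnion] at this
    obtain ⟨w, hw, hxw⟩ := this
    obtain ⟨u, hu⟩ := cover_letter hU x
    simp only [cellU, mem_iUnion]
    exact ⟨u :: w, ⟨u, w, hw, rfl⟩, hu, hxw⟩
  · refine (ENNReal.tsum_iUnion_le_tsum (price s) _).trans ?_
    have key : ∀ u : U, ∑' w : ((fun w => u :: w) '' G : Set (List U)), price s (w : List U)
        ≤ η / (U.card + 1) := by
      intro u
      rw [tsum_image (price s) (fun a _ b _ hab => by simpa using hab)]
      refine le_trans (ENNReal.tsum_le_tsum fun w => ?_) hG2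
      unfold price
      apply ENNReal.ofReal_le_ofReal
      apply Real.exp_le_exp.2
      simp only [List.length_cons, Nat.cast_add, Nat.cast_one]
      nlinarith
    refine (ENNReal.tsum_le_tsum key).trans ?_
    rw [tsum_fintype, Finset.sum_const, nsmul_eq_mul, Finset.card_univ, Fintype.card_coe]
    calc (U.card : ENNReal) * (η / (U.card + 1)) ≤ (U.card + 1) * (η / (U.card + 1)) := by
          gcongr; exact le_self_add
      _ ≤ η := ENNReal.mul_div_le

lemma null_thicken {T : X → X} {U : Finset (Set X)} (hU : ⋃₀ (U : Set (Set X)) = univ)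
    {s : ℝ} (hs : 0 ≤ s) {Z : Set X} (h : Null T U s Z) :
    Null T U s (⋃ j : ℕ, T^[j] ⁻¹' Z) := by
  refine null_iUnion fun j => ?_
  induction j with
  | zero => simpa using h
  | succ j ih =>
    rw [Function.iterate_succ, preimage_comp]
    exact null_preimage hU hs ih

lemma null_limsup {T : X → X} {U : Finset (Set X)} {s a : ℝ} (has : a < s)
    (S : ℕ → Finset (List U))
    (hS : ∀ᶠ n in atTop, (∀ w ∈ S n, w.length = n) ∧ ((S n).card : ℝ) ≤ Real.exp (a * n)) :
    Null T U s {x | ∃ᶠ n in atTop, x ∈ cellU T (S n : Set (List U))} := by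
  intro η hη
  obtain ⟨N₀, hN₀⟩ := eventually_atTop.1 hS
  set r : ENNReal := ENNReal.ofReal (Real.exp (a - s)) with hr
  have hr1 : r < 1 := by
    rw [hr, ENNReal.ofReal_lt_one]
    rw [← Real.exp_zero]; exact Real.exp_lt_exp.2 (by linarith)
  have hsum : ∑' n : ℕ, r ^ n ≠ ⊤ := by
    rw [ENNReal.tsum_geometric]
    simp [tsub_eq_zero_iff_le, hr1]
  have ht := ENNReal.tendsto_sum_nat_add (fun n => r ^ n) hsum
  have hev := (ht.eventually (gt_mem_nhds (pos_iff_ne_zero.2 hη))).and (eventually_ge_atTop N₀)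
  obtain ⟨N, hN, hNN⟩ := hev.exists
  refine ⟨⋃ k : ℕ, (S (k + N) : Set (List U)), ?_, ?_⟩
  · intro x hx
    obtain ⟨n, hn, hxn⟩ := frequently_atTop.1 hx N
    refine cellU_mono T ?_ hxn
    have := subset_iUnion (fun k : ℕ => (S (k + N) : Set (List U))) (n - N)
    simpa [Nat.sub_add_cancel hn] using this
  · refine (ENNReal.tsum_iUnion_le_tsum (price s) _).trans (le_trans ?_ hN.le)
    refine ENNReal.tsum_le_tsum fun k => ?_
    obtain ⟨h1, h2⟩ := hN₀ (k + N) (by omega)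
    have h3 : ∑' w : (S (k + N) : Set (List U)), price s (w : List U)
        = ∑ w ∈ S (k + N), price s w := Finset.tsum_subtype (S (k+N)) (price s)
    rw [h3, Finset.sum_congr rfl (g := fun _ => ENNReal.ofReal (Real.exp (-s * (k + N : ℕ))))
      (fun w hw => by rw [price, h1 w hw])]
    rw [Finset.sum_const, nsmul_eq_mul, hr, ← ENNReal.ofReal_pow (Real.exp_pos _).le,
      ← ENNReal.ofReal_natCast, ← ENNReal.ofReal_mul (by positivity)]
    apply ENNReal.ofReal_le_ofReal
    rw [← Real.exp_nat_mul]
    calc ((S (k + N)).card : ℝ) * Real.exp (-s * (k + N : ℕ))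
        ≤ Real.exp (a * (k + N : ℕ)) * Real.exp (-s * (k + N : ℕ)) := by gcongr
      _ = _ := by rw [← Real.exp_add]; congr 1; ring

lemma meas_freq [MeasurableSpace X] (μ : Measure X) [IsProbabilityMeasure μ] (A : ℕ → Set X)
    (hA : ∀ n, MeasurableSet (A n)) (c : ENNReal) (h : ∀ᶠ n in atTop, c ≤ μ (A n)) :
    c ≤ μ {x | ∃ᶠ n in atTop, x ∈ A n} := by
  have heq : {x | ∃ᶠ n in atTop, x ∈ A n} = ⋂ N : ℕ, ⋃ k : ℕ, A (k + N) := by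
    ext x
    simp only [mem_ofPred_eq, frequently_atTop, mem_iInter, mem_iUnion]
    refine forall_congr' fun N => ⟨?_, ?_⟩
    · rintro ⟨n, hn, hx⟩
      exact ⟨n - N, by rwa [Nat.sub_add_cancel hn]⟩
    · rintro ⟨k, hx⟩
      exact ⟨k + N, by omega, hx⟩
  rw [heq]
  have hanti : Antitone fun N : ℕ => ⋃ k : ℕ, A (k + N) := by
    intro N M hNM
    refine iUnion_subset fun k => ?_
    have := subset_iUnion (fun k : ℕ => A (k + N)) (k + (M - N))
    simpa [show k + (M - N) + N = k + M by omega] using this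
  have ht := tendsto_measure_iInter_atTop (μ := μ)
    (fun N => (MeasurableSet.iUnion fun k => hA (k + N)).nullMeasurableSet) hanti
    ⟨0, measure_ne_top _ _⟩
  refine ge_of_tendsto ht ?_
  filter_upwards [h] with n hn
  refine hn.trans (measure_mono ?_)
  simpa using subset_iUnion (fun k : ℕ => A (k + n)) 0

lemma measurableSet_freq [MeasurableSpace X] (A : ℕ → Set X)
    (hA : ∀ n, MeasurableSet (A n)) : MeasurableSet {x | ∃ᶠ n in atTop, x ∈ A n} := by
  have := MeasurableSet.measurableSet_limsup hA
  convert this using 1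
  ext x
  simp [mem_limsup_iff_frequently_mem]

lemma full_of_pos [MeasurableSpace X] {T : X → X} (μ : Measure X) [IsProbabilityMeasure μ]
    (hμ : Ergodic T μ) {Z : Set X} (hZ : MeasurableSet Z) (h0 : μ Z ≠ 0) :
    μ (⋃ j : ℕ, T^[j] ⁻¹' Z) = 1 := by
  have hTm : Measurable T := hμ.measurable
  have hm : MeasurableSet (⋃ j : ℕ, T^[j] ⁻¹' Z) :=
    MeasurableSet.iUnion fun j => (hTm.iterate j) hZ
  have hsub : T ⁻¹' (⋃ j : ℕ, T^[j] ⁻¹' Z) ⊆ ⋃ j : ℕ, T^[j] ⁻¹' Z := by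
    rw [preimage_iUnion]
    refine iUnion_subset fun j => ?_
    rw [← preimage_comp, ← Function.iterate_succ]
    exact subset_iUnion (fun j : ℕ => T^[j] ⁻¹' Z) (j + 1)
  rcases hμ.ae_empty_or_univ_of_preimage_ae_le hm.nullMeasurableSet hsub.eventuallyLE with h | h
  · exfalso
    apply h0
    have h1 : μ (⋃ j : ℕ, T^[j] ⁻¹' Z) = 0 := by rw [measure_congr h]; simp
    refine measure_mono_null ?_ h1
    simpa using subset_iUnion (fun j : ℕ => T^[j] ⁻¹' Z) 0
  · rw [measure_congr h]; simp

lemma measurable_cnt [MeasurableSpace X] {T : X → X} (hT : Measurable T) {W : Set X}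
    (hW : MeasurableSet W) (n : ℕ) : Measurable (cnt T W n) := by
  unfold cnt
  refine Finset.measurable_sum _ fun i _ => ?_
  exact (measurable_const.indicator hW.compl).comp (hT.iterate i)

lemma lintegral_cnt [MeasurableSpace X] {T : X → X} (μ : Measure X)
    (hμ : MeasurePreserving T μ μ) {W : Set X} (hW : MeasurableSet W) (n : ℕ) :
    ∫⁻ x, (cnt T W n x : ENNReal) ∂μ = n * μ Wᶜ := by
  unfold cnt
  have h1 : ∀ x, ((∑ i ∈ Finset.range n, Wᶜ.indicator (fun _ => 1) (T^[i] x) : ℕ) : ENNReal)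
      = ∑ i ∈ Finset.range n, (Wᶜ.indicator (fun _ => (1 : ENNReal)) (T^[i] x)) := by
    intro x
    push_cast
    refine Finset.sum_congr rfl fun i _ => ?_
    by_cases h : T^[i] x ∈ Wᶜ <;> simp [h]
  simp_rw [h1]
  have hm : Measurable (Wᶜ.indicator (fun _ : X => (1 : ENNReal))) :=
    measurable_const.indicator hW.compl
  rw [lintegral_finsetSum]
  · rw [Finset.sum_congr rfl (g := fun _ => μ Wᶜ)]
    · simp
    · intro i _
      rw [(hμ.iterate i).lintegral_comp hm, lintegral_indicator_const hW.compl, one_mul]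
  · intro i _
    exact hm.comp (hμ.measurable.iterate i)

lemma cnt_freq [MeasurableSpace X] {T : X → X} (μ : Measure X) [IsProbabilityMeasure μ]
    (hμ : MeasurePreserving T μ μ) {W : Set X} (hW : MeasurableSet W) {ε : ℝ} (hε : 0 < ε)
    (h : μ Wᶜ ≤ ENNReal.ofReal (ε / 2)) :
    μ {x | ∃ᶠ n : ℕ in atTop, x ∈ {y | cnt T W n y ≤ ⌊ε * n⌋₊}} ≠ 0 := by
  have hm : ∀ n : ℕ, MeasurableSet {y | cnt T W n y ≤ ⌊ε * n⌋₊} := fun n =>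
    measurableSet_le (measurable_cnt hμ.measurable hW n) measurable_const
  have hc : (2⁻¹ : ENNReal) ≤ μ {x | ∃ᶠ n : ℕ in atTop, x ∈ {y | cnt T W n y ≤ ⌊ε * n⌋₊}} := by
    refine meas_freq μ _ hm _ ?_
    filter_upwards [eventually_gt_atTop 0] with n hn
    have hn' : (0:ℝ) < n := by exact_mod_cast hn
    have hb : μ {y | cnt T W n y ≤ ⌊ε * n⌋₊}ᶜ ≤ 2⁻¹ := by
      have hmk := mul_meas_ge_le_lintegral (μ := μ) (f := fun x => (cnt T W n x : ENNReal))
        (measurable_from_top.comp (measurable_cnt hμ.measurable hW n)) (ENNReal.ofReal (ε * n))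
      rw [lintegral_cnt μ hμ hW] at hmk
      have hsub : {y | cnt T W n y ≤ ⌊ε * n⌋₊}ᶜ
          ⊆ {x | ENNReal.ofReal (ε * n) ≤ (cnt T W n x : ENNReal)} := by
        intro y hy
        simp only [mem_compl_iff, mem_ofPred_eq, not_le] at hy ⊢
        have := (Nat.floor_lt (by positivity)).1 hy
        rw [← ENNReal.ofReal_natCast]
        exact ENNReal.ofReal_le_ofReal this.le
      have h1 : ENNReal.ofReal (ε * n) * μ {y | cnt T W n y ≤ ⌊ε * n⌋₊}ᶜ
          ≤ ENNReal.ofReal (ε * n) * 2⁻¹ := by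
        calc _ ≤ _ := by gcongr
          _ ≤ _ := hmk
          _ ≤ n * ENNReal.ofReal (ε / 2) := by gcongr
          _ = _ := by
            rw [← ENNReal.ofReal_natCast, ← ENNReal.ofReal_mul (by positivity),
              show (2⁻¹ : ENNReal) = ENNReal.ofReal (2⁻¹) by
                rw [ENNReal.ofReal_inv_of_pos (by norm_num)]; simp,
              ← ENNReal.ofReal_mul (by positivity)]
            congr 1; ring
      exact (ENNReal.mul_le_mul_iff_right (by simp; positivity) ENNReal.ofReal_ne_top).1 h1
    have h2 := prob_add_prob_compl (μ := μ) (hm n)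
    by_contra hcon
    rw [not_le] at hcon
    have : (1 : ENNReal) < 1 := by
      calc (1 : ENNReal) = _ := h2.symm
        _ < 2⁻¹ + 2⁻¹ := ENNReal.add_lt_add_of_lt_of_le (by
            exact ne_top_of_le_ne_top (by simp) hb) hcon hb
        _ = 1 := ENNReal.inv_two_add_inv_two
    exact lt_irrefl _ this
  intro h0
  rw [h0] at hc
  simp at hc

section Meas

set_option linter.unusedSectionVars false

variable [MetricSpace X] [CompactSpace X] [MeasurableSpace X] [BorelSpace X]

lemma usc_closed {K : Set X} (hK : IsClosed K) :
    UpperSemicontinuous fun ν : ProbabilityMeasure X => (ν : Measure X) K := by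
  intro ν
  refine upperSemicontinuousAt_iff_limsup_le.2 ?_
  exact ProbabilityMeasure.limsup_measure_closed_le_of_tendsto tendsto_id hK

/-- Invariant probability measures. -/
def invMeas (T : X → X) : Set (ProbabilityMeasure X) :=
  {ν | Measure.map T (ν : Measure X) = ν}

lemma isClosed_invMeas {T : X → X} (hT : Continuous T) : IsClosed (invMeas T) := by
  have h := isClosed_eq (ProbabilityMeasure.continuous_map hT) continuous_id
  convert h using 1
  ext ν
  simp only [invMeas, mem_ofPred_eq, id]
  rw [← ProbabilityMeasure.toMeasure_injective.eq_iff]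
  simp

/-- If a closed set is null for every ergodic measure, it is null for every invariant one. -/
lemma null_of_ergodic {T : X → X} (hT : Continuous T) {K : Set X} (hK : IsClosed K)
    (h : ∀ μ ∈ ergodicMeasures T, μ K = 0) (ν : ProbabilityMeasure X) (hν : ν ∈ invMeas T) :
    (ν : Measure X) K = 0 := by
  obtain ⟨ρ, hρ, hmax⟩ := UpperSemicontinuousOn.exists_isMaxOn (f :=
    fun ν : ProbabilityMeasure X => (ν : Measure X) K) ⟨ν, hν⟩
    (isClosed_invMeas hT).isCompact ((usc_closed hK).upperSemicontinuousOn _)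
  set c := (ρ : Measure X) K with hc
  let F : Set (ProbabilityMeasure X) := invMeas T ∩ {ν | c ≤ (ν : Measure X) K}
  have hF : IsCompact F :=
    ((isClosed_invMeas hT).inter ((usc_closed hK).isClosed_preimage c)).isCompact
  let Φ : ProbabilityMeasure X → (BoundedContinuousFunction X ℝ → ℝ) :=
    fun ν f => ∫ x, f x ∂(ν : Measure X)
  have hΦ : Continuous Φ := continuous_pi fun f =>
    ProbabilityMeasure.continuous_iff_forall_continuous_integral.1 continuous_id f
  obtain ⟨p, hp⟩ := (hF.image hΦ).extremePoints_nonempty ⟨Φ ρ, ρ, ⟨hρ, le_refl c⟩, rfl⟩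
  obtain ⟨⟨μ, hμF, rfl⟩, hext⟩ := hp
  have herg : Ergodic T (μ : Measure X) := by
    apply Ergodic.of_mem_extremePoints
    rw [mem_extremePoints_iff_left]
    refine ⟨⟨⟨hT.measurable, hμF.1⟩, inferInstance⟩, ?_⟩
    rintro μ₁ ⟨h1, h1p⟩ μ₂ ⟨h2, h2p⟩ ⟨a, b, ha, hb, hab, hcomb⟩
    have hat : a ≠ ⊤ := by rintro rfl; simp at hab
    have hbt : b ≠ ⊤ := by rintro rfl; simp at hab
    let m₁ : ProbabilityMeasure X := ⟨μ₁, h1p⟩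
    let m₂ : ProbabilityMeasure X := ⟨μ₂, h2p⟩
    have hm1 : m₁ ∈ invMeas T := h1.map_eq
    have hm2 : m₂ ∈ invMeas T := h2.map_eq
    have hl1 : μ₁ K ≤ c := hmax hm1
    have hl2 : μ₂ K ≤ c := hmax hm2
    have hct : c ≠ ⊤ := measure_ne_top _ _
    have hcK : c ≤ a * μ₁ K + b * μ₂ K := by
      have := hμF.2
      rw [mem_ofPred_eq, ← hcomb] at this
      simpa using this
    have hg1 : c ≤ μ₁ K := by
      by_contra hcon
      rw [not_le] at hcon
      have : c < c := by
        calc c ≤ a * μ₁ K + b * μ₂ K := hcK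
          _ < a * c + b * c := by
            refine ENNReal.add_lt_add_of_lt_of_le ?_ ?_ ?_
            · exact ENNReal.mul_ne_top hbt (measure_ne_top _ _)
            · exact (ENNReal.mul_lt_mul_iff_right ha.ne' hat).2 hcon
            · gcongr
          _ = c := by rw [← add_mul, hab, one_mul]
      exact lt_irrefl _ this
    have hg2 : c ≤ μ₂ K := by
      by_contra hcon
      rw [not_le] at hcon
      have : c < c := by
        calc c ≤ a * μ₁ K + b * μ₂ K := hcK
          _ < a * c + b * c := by
            refine ENNReal.add_lt_add_of_le_of_lt ?_ ?_ ?_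
            · exact ENNReal.mul_ne_top hat (measure_ne_top _ _)
            · gcongr
            · exact (ENNReal.mul_lt_mul_iff_right hb.ne' hbt).2 hcon
          _ = c := by rw [← add_mul, hab, one_mul]
      exact lt_irrefl _ this
    have hseg : Φ μ ∈ openSegment ℝ (Φ m₁) (Φ m₂) := by
      refine ⟨a.toReal, b.toReal, ENNReal.toReal_pos ha.ne' hat, ENNReal.toReal_pos hb.ne' hbt,
        ?_, ?_⟩
      · rw [← ENNReal.toReal_add hat hbt, hab, ENNReal.toReal_one]
      · funext f
        simp only [Φ, Pi.add_apply, Pi.smul_apply, smul_eq_mul]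
        rw [← hcomb, integral_add_measure, integral_smul_measure, integral_smul_measure]
        · rfl
        · exact (f.integrable μ₁).smul_measure hat
        · exact (f.integrable μ₂).smul_measure hbt
    have heq := hext ⟨m₁, ⟨hm1, hg1⟩, rfl⟩ ⟨m₂, ⟨hm2, hg2⟩, rfl⟩ hseg
    have heq1 : Φ m₁ = Φ μ := heq
    exact ext_of_forall_integral_eq_of_IsFiniteMeasure fun f => congrFun heq1 f
  have h0 := h μ ⟨inferInstance, herg⟩
  have hc0 : c = 0 := by
    have : c ≤ (μ : Measure X) K := hμF.2
    rw [h0] at this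
    exact le_antisymm this zero_le
  have : (ν : Measure X) K ≤ c := hmax hν
  rw [hc0] at this
  exact le_antisymm this zero_le

/-- Empirical measures. -/
noncomputable def emp (T : X → X) (n : ℕ) (x : X) : Measure X :=
  (n : ENNReal)⁻¹ • ∑ i ∈ Finset.range n, Measure.dirac (T^[i] x)

lemma emp_prob (T : X → X) {n : ℕ} (hn : n ≠ 0) (x : X) : IsProbabilityMeasure (emp T n x) := by
  constructor
  simp only [emp, Measure.smul_apply, Measure.finsetSum_apply, smul_eq_mul]
  simp [ENNReal.inv_mul_cancel, hn]

lemma emp_apply (T : X → X) (n : ℕ) (x : X) {W : Set X} (hW : MeasurableSet W) :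
    emp T n x Wᶜ = (n : ENNReal)⁻¹ * cnt T W n x := by
  simp only [emp, Measure.smul_apply, Measure.finsetSum_apply, smul_eq_mul, cnt]
  congr 1
  push_cast
  refine Finset.sum_congr rfl fun i _ => ?_
  rw [Measure.dirac_apply' _ hW.compl]
  by_cases h : T^[i] x ∈ Wᶜ <;> simp [h]

lemma emp_integral (T : X → X) (n : ℕ) (x : X) (f : X → ℝ) :
    ∫ y, f y ∂(emp T n x) = (n : ℝ)⁻¹ * ∑ i ∈ Finset.range n, f (T^[i] x) := by
  rw [emp, integral_smul_measure, integral_finsetSum_measure]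
  · simp
  · intro i _
    exact integrable_dirac (by simp)

lemma exists_inv {T : X → X} (hT : Continuous T) (W : ℕ → Set X) (hW : ∀ m, IsOpen (W m))
    (hmono : Monotone W) {ε : ℝ} (hε : 0 < ε)
    (h : ∀ m : ℕ, ∃ n : ℕ, ∃ x : X, m ≤ n ∧ 0 < n ∧ ε * n ≤ cnt T (W m) n x) :
    ∃ ν ∈ invMeas T, (ν : Measure X) (⋃ m, W m)ᶜ ≠ 0 := by
  choose n x hmn hn hc using h
  let ν : ℕ → ProbabilityMeasure X := fun m => ⟨emp T (n m) (x m), emp_prob T (hn m).ne' _⟩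
  obtain ⟨ρ, -, hρ⟩ := isCompact_univ.ultrafilter_le_nhds ((hyperfilter ℕ).map ν) (by simp)
  have hlim : Tendsto ν (hyperfilter ℕ : Filter ℕ) (𝓝 ρ) := hρ
  have hle : (hyperfilter ℕ : Filter ℕ) ≤ atTop := by
    rw [← Nat.cofinite_eq_atTop]; exact hyperfilter_le_cofinite
  refine ⟨ρ, ?_, ?_⟩
  · have hpm : IsProbabilityMeasure (Measure.map T (ρ : Measure X)) :=
      Measure.isProbabilityMeasure_map hT.measurable.aemeasurable
    refine ext_of_forall_integral_eq_of_IsFiniteMeasure fun f => ?_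
    rw [integral_map hT.measurable.aemeasurable f.continuous.aestronglyMeasurable]
    have h1 := (ProbabilityMeasure.tendsto_iff_forall_integral_tendsto.1 hlim)
    have h2 := h1 f
    have h3 := h1 (f.compContinuous ⟨T, hT⟩)
    have h4 := h3.sub h2
    have h5 : Tendsto (fun m => ∫ y, (f.compContinuous ⟨T, hT⟩) y ∂(ν m : Measure X)
        - ∫ y, f y ∂(ν m : Measure X)) (hyperfilter ℕ : Filter ℕ) (𝓝 0) := by
      refine Tendsto.mono_left ?_ hle
      have hb : ∀ m, ‖∫ y, (f.compContinuous ⟨T, hT⟩) y ∂(ν m : Measure X)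
        - ∫ y, f y ∂(ν m : Measure X)‖ ≤ 2 * ‖f‖ * (1 / (n m : ℝ)) := by
        intro m
        have e1 : ∫ y, (f.compContinuous ⟨T, hT⟩) y ∂(ν m : Measure X)
            = (n m : ℝ)⁻¹ * ∑ i ∈ Finset.range (n m), f (T^[i + 1] (x m)) := by
          have := emp_integral T (n m) (x m) (fun y => f (T y))
          simp only [Function.iterate_succ_apply']
          exact this
        have e2 : ∫ y, f y ∂(ν m : Measure X)
            = (n m : ℝ)⁻¹ * ∑ i ∈ Finset.range (n m), f (T^[i] (x m)) :=
          emp_integral T (n m) (x m) f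
        rw [e1, e2, ← mul_sub, ← Finset.sum_sub_distrib,
          Finset.sum_range_sub (fun i => f (T^[i] (x m))), norm_mul]
        have e3 : ‖f (T^[n m] (x m)) - f (T^[0] (x m))‖ ≤ 2 * ‖f‖ := by
          refine (norm_sub_le _ _).trans ?_
          have := f.norm_coe_le_norm (T^[n m] (x m))
          have := f.norm_coe_le_norm (T^[0] (x m))
          linarith
        rw [norm_inv, Real.norm_natCast, ← one_div]
        calc _ ≤ 1 / (n m : ℝ) * (2 * ‖f‖) := by gcongr
          _ = _ := by ring
      refine squeeze_zero_norm hb ?_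
      have hn' : Tendsto n atTop atTop := tendsto_atTop_mono hmn tendsto_id
      simpa using ((tendsto_one_div_atTop_nhds_zero_nat (𝕜 := ℝ)).comp hn').const_mul (2 * ‖f‖)
    have h6 := tendsto_nhds_unique h4 h5
    exact sub_eq_zero.1 h6
  · have key : ∀ m, ENNReal.ofReal ε ≤ (ρ : Measure X) (W m)ᶜ := by
      intro m
      refine le_trans ?_ (ProbabilityMeasure.limsup_measure_closed_le_of_tendsto hlim
        (hW m).isClosed_compl)
      refine le_limsup_of_frequently_le (Eventually.frequently ?_)
      refine hle ?_
      filter_upwards [eventually_ge_atTop m] with j hj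
      have h1 : (ν j : Measure X) (W j)ᶜ ≤ (ν j : Measure X) (W m)ᶜ :=
        measure_mono (compl_subset_compl.2 (hmono hj))
      refine le_trans ?_ h1
      have h2 : (ν j : Measure X) (W j)ᶜ = (n j : ENNReal)⁻¹ * cnt T (W j) (n j) (x j) :=
        emp_apply T (n j) (x j) (hW j).measurableSet
      rw [h2, mul_comm, ← div_eq_mul_inv, ENNReal.le_div_iff_mul_le]
      · rw [← ENNReal.ofReal_natCast, ← ENNReal.ofReal_natCast, ← ENNReal.ofReal_mul hε.le]
        exact ENNReal.ofReal_le_ofReal (hc j)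
      · left; simpa using (hn j).ne'
      · left; simp
    have ht := tendsto_measure_iInter_atTop (μ := (ρ : Measure X)) (s := fun m => (W m)ᶜ)
      (fun m => (hW m).measurableSet.compl.nullMeasurableSet)
      (fun a b hab => compl_subset_compl.2 (hmono hab)) ⟨0, measure_ne_top _ _⟩
    rw [compl_iUnion]
    have := ge_of_tendsto ht (Eventually.of_forall key)
    intro h0
    rw [h0] at this
    simp at this
    linarith

lemma exists_ergodic [Nonempty X] {T : X → X} (hT : Continuous T) :
    (ergodicMeasures T).Nonempty := by
  by_contra hcon
  rw [not_nonempty_iff_eq_empty] at hcon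
  obtain ⟨ν, hν, hν0⟩ := exists_inv hT (fun _ => ∅) (fun _ => isOpen_empty) (fun _ _ _ => le_refl _)
    one_pos (fun m => ⟨m + 1, Classical.arbitrary X, by omega, by omega, by simp [cnt]⟩)
  apply hν0
  simp only [iUnion_empty, compl_empty]
  exact null_of_ergodic hT isClosed_univ (by simp [hcon]) ν hν

end Meas

lemma Null.mono {T : X → X} {U : Finset (Set X)} {s : ℝ} {Z Z' : Set X} (h : Null T U s Z')
    (hsub : Z ⊆ Z') : Null T U s Z := fun η hη => by
  obtain ⟨G, h1, h2⟩ := h η hη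
  exact ⟨G, hsub.trans h1, h2⟩

lemma exhaust (T : X → X) {U : Finset (Set X)} (G : Set (List U)) :
    ∃ g : ℕ → Finset (List U), (Monotone fun m => cellU T (g m : Set (List U))) ∧
      (∀ m, (g m : Set (List U)) ⊆ G) ∧ ⋃ m, cellU T (g m : Set (List U)) = cellU T G := by
  obtain ⟨e, he⟩ := exists_injective_nat (List U)
  have hfin : ∀ m, (G ∩ e ⁻¹' Iio m).Finite := fun m =>
    ((finite_Iio m).preimage he.injOn).subset inter_subset_right
  refine ⟨fun m => (hfin m).toFinset, ?_, ?_, ?_⟩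
  · intro a b hab
    apply cellU_mono
    simp only [Finite.coe_toFinset]
    exact inter_subset_inter_right _ (preimage_mono (Iio_subset_Iio hab))
  · intro m
    simp
  · apply Subset.antisymm
    · refine iUnion_subset fun m => cellU_mono T (by simp)
    · intro x hx
      simp only [cellU, mem_iUnion] at hx ⊢
      obtain ⟨w, hw, hx⟩ := hx
      exact ⟨e w + 1, w, by simp [hw], hx⟩

lemma sum_le_half {U : Finset (Set X)} {s : ℝ} {G : Set (List U)}
    (hG : ∑' w : G, price s (w : List U) ≤ 2⁻¹) (g : Finset (List U))
    (hg : (g : Set (List U)) ⊆ G) : ∑ w ∈ g, Real.exp (-s * w.length) ≤ 1 / 2 := by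
  have h1 : ∑ w ∈ g, price s w ≤ 2⁻¹ := by
    rw [← Finset.tsum_subtype g (price s)]
    exact (ENNReal.tsum_mono_subtype (price s) hg).trans hG
  unfold price at h1
  rw [← ENNReal.ofReal_sum_of_nonneg (fun i _ => (Real.exp_pos _).le),
    show (2⁻¹ : ENNReal) = ENNReal.ofReal (1 / 2) by
      rw [one_div, ENNReal.ofReal_inv_of_pos (by norm_num)]; simp] at h1
  exact (ENNReal.ofReal_le_ofReal_iff (by norm_num)).1 h1

lemma count_cover' (T : X → X) {U : Finset (Set X)} (hU : ⋃₀ (U : Set (Set X)) = univ)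
    (hne : U.Nonempty) (s : ℝ) (hs : 0 ≤ s) (g : Finset (List U))
    (hg : ∑ w ∈ g, Real.exp (-s * w.length) ≤ 1 / 2) {ε b : ℝ} (hε : 0 < ε)
    (hb : s + ε * Real.log (4 * U.card) < b) :
    ∀ᶠ n : ℕ in atTop, ∃ S : Finset (List U), (∀ w ∈ S, w.length = n) ∧
      {x | cnt T (cellU T (g : Set (List U))) n x ≤ ⌊ε * n⌋₊} ⊆ cellU T (S : Set (List U)) ∧
      (S.card : ℝ) ≤ Real.exp (b * n) := by
  have hU1 : (1:ℝ) ≤ U.card := by exact_mod_cast hne.card_pos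
  have hL0 : (0:ℝ) < 4 * U.card := by linarith
  have hlog : 0 ≤ Real.log (4 * U.card) := Real.log_nonneg (by linarith)
  set c := b - (s + ε * Real.log (4 * U.card)) with hc
  have hc0 : 0 < c := by rw [hc]; linarith
  have ht : Tendsto (fun n : ℕ => c * (n : ℝ)) atTop atTop :=
    tendsto_natCast_atTop_atTop.const_mul_atTop hc0
  filter_upwards [ht.eventually_ge_atTop (Real.log (4 * g.card + 1))] with n hn
  obtain ⟨S, h1, h2, h3⟩ := count_cover T hU hne s hs g hg n ⌊ε * n⌋₊
  refine ⟨S, h1, h2, h3.trans ?_⟩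
  have hA : (0:ℝ) < 4 * g.card + 1 := by positivity
  have e1 : (4 * (g.card:ℝ) + 1) ≤ Real.exp (c * n) := by
    rw [← Real.log_le_iff_le_exp hA]; exact hn
  have e2 : (4 * (U.card:ℝ)) ^ ⌊ε * n⌋₊ ≤ Real.exp (ε * Real.log (4 * U.card) * n) := by
    rw [← Real.log_le_iff_le_exp (by positivity), Real.log_pow]
    have : (⌊ε * n⌋₊ : ℝ) ≤ ε * n := Nat.floor_le (by positivity)
    calc (⌊ε * n⌋₊ : ℝ) * Real.log (4 * U.card) ≤ ε * n * Real.log (4 * U.card) := by gcongr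
      _ = _ := by ring
  calc (4 * (g.card:ℝ) + 1) * Real.exp (s * n) * (4 * U.card) ^ ⌊ε * n⌋₊
      ≤ Real.exp (c * n) * Real.exp (s * n) * Real.exp (ε * Real.log (4 * U.card) * n) := by
        gcongr
    _ = Real.exp (b * n) := by
      rw [← Real.exp_add, ← Real.exp_add]; congr 1; rw [hc]; ring

lemma exists_full (T : X → X) {U : Finset (Set X)} (hU : ⋃₀ (U : Set (Set X)) = univ)
    (hne : U.Nonempty) (n : ℕ) :
    ∃ S : Finset (List U), (∀ w ∈ S, w.length = n) ∧ cellU T (S : Set (List U)) = univ := by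
  obtain ⟨S, h1, h2, -⟩ := count_cover T hU hne 0 le_rfl ∅ (by simp) n n
  refine ⟨S, h1, univ_subset_iff.1 (subset_trans ?_ h2)⟩
  intro x _
  simp [cnt, cellU]

open Classical in
lemma image_cell (T : X → X) {U : Finset (Set X)} {n : ℕ} (S : Finset (List U))
    (hS : ∀ w ∈ S, w.length = n) : ((S.image (cell T) : Finset (Set X)) : Set (Set X))
      ⊆ dynRefine T U n ∧ ⋃₀ ((S.image (cell T) : Finset (Set X)) : Set (Set X))
      = cellU T (S : Set (List U)) := by
  constructor
  · intro V hV
    obtain ⟨w, hw, rfl⟩ := Finset.mem_image.1 (Finset.mem_coe.1 hV)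
    have := cell_mem_dynRefine T w
    rwa [hS w hw] at this
  · simp [cellU, sUnion_image]

lemma coverNum_le (T : X → X) {U : Finset (Set X)} {n : ℕ} (S : Finset (List U))
    (hS : ∀ w ∈ S, w.length = n) (hc : cellU T (S : Set (List U)) = univ) :
    coverNum (dynRefine T U n) ≤ S.card := by
  classical
  obtain ⟨h1, h2⟩ := image_cell T S hS
  have h3 : coverNum (dynRefine T U n) ≤ (S.image (cell T)).card :=
    Nat.sInf_le ⟨S.image (cell T), h1, h2.trans hc, rfl⟩
  exact h3.trans Finset.card_image_le

lemma coverNum_spec (T : X → X) {U : Finset (Set X)} (hU : ⋃₀ (U : Set (Set X)) = univ)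
    (hne : U.Nonempty) (n : ℕ) : ∃ F : Finset (Set X), ↑F ⊆ dynRefine T U n ∧
      ⋃₀ (F : Set (Set X)) = univ ∧ F.card = coverNum (dynRefine T U n) := by
  classical
  obtain ⟨S, hS, hc⟩ := exists_full T hU hne n
  obtain ⟨h1, h2⟩ := image_cell T S hS
  exact Nat.sInf_mem (s := {m | ∃ F : Finset (Set X), ↑F ⊆ dynRefine T U n ∧
    ⋃₀ (F : Set (Set X)) = univ ∧ F.card = m}) ⟨_, S.image (cell T), h1, h2.trans hc, rfl⟩

section Final

variable [MeasurableSpace X]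

lemma shapiraNum_le (T : X → X) {U : Finset (Set X)} (hU : ⋃₀ (U : Set (Set X)) = univ)
    (hne : U.Nonempty) (μ : Measure X) [IsProbabilityMeasure μ] {δ : ℝ} (hδ : δ ≤ 1) (n : ℕ) :
    shapiraNum T μ U n δ ≤ coverNum (dynRefine T U n) := by
  obtain ⟨F, h1, h2, h3⟩ := coverNum_spec T hU hne n
  refine Nat.sInf_le ⟨F, h1, ?_, h3⟩
  rw [h2, measure_univ]
  simpa using hδ

lemma shapiraNum_spec (T : X → X) {U : Finset (Set X)} (hU : ⋃₀ (U : Set (Set X)) = univ)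
    (hne : U.Nonempty) (μ : Measure X) [IsProbabilityMeasure μ] {δ : ℝ} (hδ : δ ≤ 1) (n : ℕ) :
    ∃ S : Finset (List U), (∀ w ∈ S, w.length = n) ∧
      ENNReal.ofReal δ ≤ μ (cellU T (S : Set (List U))) ∧ S.card ≤ shapiraNum T μ U n δ := by
  classical
  obtain ⟨F, h1, h2, h3⟩ := coverNum_spec T hU hne n
  obtain ⟨F, h1, h2, h3⟩ := Nat.sInf_mem (s := {m | ∃ F : Finset (Set X), ↑F ⊆ dynRefine T U n ∧
    ENNReal.ofReal δ ≤ μ (⋃₀ (F : Set (Set X))) ∧ F.card = m})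
    ⟨_, F, h1, by rw [h2, measure_univ]; simpa using hδ, rfl⟩
  have : ∀ V : Set X, ∃ w : List U, V ∈ F → w.length = n ∧ cell T w = V := by
    intro V
    by_cases hV : V ∈ F
    · obtain ⟨w, hw⟩ := exists_word (h1 (Finset.mem_coe.2 hV))
      exact ⟨w, fun _ => hw⟩
    · exact ⟨[], fun h => absurd h hV⟩
  choose w hw using this
  refine ⟨F.image w, ?_, ?_, ?_⟩
  · intro v hv
    obtain ⟨V, hV, rfl⟩ := Finset.mem_image.1 hv
    exact (hw V hV).1
  · refine h2.trans (measure_mono ?_)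
    rintro x ⟨V, hV, hx⟩
    simp only [cellU, mem_iUnion]
    refine ⟨w V, Finset.mem_coe.2 (Finset.mem_image_of_mem _ hV), ?_⟩
    rw [(hw V hV).2]
    exact hx
  · exact Finset.card_image_le.trans h3.le

variable [TopologicalSpace X] [BorelSpace X]

lemma exists_null {T : X → X} (hT : Continuous T) {U : Finset (Set X)}
    (hU : IsFiniteOpenCover U) (hne : U.Nonempty) (μ : Measure X) [IsProbabilityMeasure μ]
    {δ : ℝ} (hδ0 : 0 < δ) (hδ : δ ≤ 1) {a s : ℝ} (has : a < s)
    (h : shapiraEnt T μ U δ < (a : EReal)) :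
    ∃ Z, MeasurableSet Z ∧ μ Z ≠ 0 ∧ Null T U s Z := by
  choose S hS1 hS2 hS3 using fun n => shapiraNum_spec T hU.2 hne μ hδ n
  have hm : ∀ n, MeasurableSet (cellU T (S n : Set (List U))) := fun n =>
    (isOpen_cellU hT hU.1 _).measurableSet
  refine ⟨{x | ∃ᶠ n in atTop, x ∈ cellU T (S n : Set (List U))}, measurableSet_freq _ hm, ?_, ?_⟩
  · have := meas_freq μ _ hm _ (Eventually.of_forall hS2)
    intro h0
    rw [h0] at this
    simp at this
    linarith
  · refine null_limsup has S ?_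
    have hev := eventually_lt_of_limsup_lt h
    filter_upwards [hev, eventually_gt_atTop 0] with n hn hn0
    refine ⟨hS1 n, ?_⟩
    have hn1 : (0:ℝ) < n := by exact_mod_cast hn0
    have h1 : Real.log (shapiraNum T μ U n δ) / n < a := by exact_mod_cast hn
    rw [div_lt_iff₀ hn1] at h1
    have h2 : ((S n).card : ℝ) ≤ shapiraNum T μ U n δ := by exact_mod_cast hS3 n
    refine h2.trans ?_
    rcases Nat.eq_zero_or_pos (shapiraNum T μ U n δ) with h0 | h0
    · rw [h0]; simp; positivity
    · rw [← Real.log_le_iff_le_exp (by exact_mod_cast h0)]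
      exact h1.le

lemma exists_good {T : X → X} (hT : Continuous T) {U : Finset (Set X)}
    (hU : IsFiniteOpenCover U) (μ : Measure X) [IsProbabilityMeasure μ]
    (hμ : Ergodic T μ) {s : ℝ} (hs : 0 ≤ s) {Z : Set X} (hZ : MeasurableSet Z) (hZ0 : μ Z ≠ 0)
    (hN : Null T U s Z) {ε : ℝ} (hε : 0 < ε) :
    ∃ g : Finset (List U), ∑ w ∈ g, Real.exp (-s * w.length) ≤ 1 / 2 ∧
      μ (cellU T (g : Set (List U)))ᶜ ≤ ENNReal.ofReal (ε / 2) := by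
  obtain ⟨G, hG1, hG2⟩ := null_thicken hU.2 hs hN 2⁻¹ (by simp)
  have h1 : μ (cellU T G) = 1 := by
    refine le_antisymm prob_le_one ?_
    rw [← full_of_pos μ hμ hZ hZ0]
    exact measure_mono hG1
  obtain ⟨g, hmono, hgG, hgU⟩ := exhaust T G
  have ht := tendsto_measure_iInter_atTop (μ := μ)
    (s := fun m => (cellU T (g m : Set (List U)))ᶜ)
    (fun m => (isOpen_cellU hT hU.1 _).measurableSet.compl.nullMeasurableSet)
    (fun a b hab => compl_subset_compl.2 (hmono hab)) ⟨0, measure_ne_top _ _⟩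
  rw [← compl_iUnion, hgU, (prob_compl_eq_zero_iff (isOpen_cellU hT hU.1 _).measurableSet).2 h1]
    at ht
  have hpos : (0 : ENNReal) < ENNReal.ofReal (ε / 2) := by simpa using hε
  obtain ⟨m, hm⟩ := (ht.eventually (gt_mem_nhds hpos)).exists
  exact ⟨g m, sum_le_half hG2 (g m) (hgG m), hm.le⟩

end Final

lemma main_bound [MetricSpace X] [CompactSpace X] [MeasurableSpace X] [BorelSpace X]
    {T : X → X} (hT : Continuous T) {U : Finset (Set X)}
    (hU : IsFiniteOpenCover U) (hne : U.Nonempty) {δ : ℝ} (hδ0 : 0 < δ) (hδ : δ ≤ 1)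
    {a b : ℝ} (ha : 0 ≤ a) (hab : a < b)
    (h : ∀ μ ∈ ergodicMeasures T, shapiraEnt T μ U δ < (a : EReal)) :
    limsup (fun n : ℕ => ((Real.log (coverNum (dynRefine T U n)) / n : ℝ) : EReal)) atTop
      ≤ (b : EReal) := by
  have hU1 : (1:ℝ) ≤ U.card := by exact_mod_cast hne.card_pos
  set κ := Real.log (4 * U.card) with hκ
  have hκ0 : 0 < κ := Real.log_pos (by linarith)
  set t := (b - a) / 5 with ht
  have ht0 : 0 < t := by rw [ht]; linarith
  set ε := t / κ with hεd
  have hε : 0 < ε := by positivity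
  have hεκ : ε * κ = t := by rw [hεd]; field_simp
  let D : {g : Finset (List U) // ∑ w ∈ g, Real.exp (-(a + t) * w.length) ≤ 1 / 2} → Set X :=
    fun g => {x | ∃ᶠ n : ℕ in atTop,
      x ∈ {y | cnt T (cellU T (g.1 : Set (List U))) n y ≤ ⌊ε * n⌋₊}}
  have hDm : ∀ g, MeasurableSet (D g) := fun g => measurableSet_freq _ fun n =>
    measurableSet_le (measurable_cnt hT.measurable (isOpen_cellU hT hU.1 _).measurableSet n)
      measurable_const
  have hDn : ∀ g, Null T U (a + 3 * t) (D g) := by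
    intro g
    have hev := count_cover' T hU.2 hne (a + t) (by linarith) g.1 g.2 hε
      (b := a + 5 / 2 * t) (by rw [← hκ, hεκ]; linarith)
    have : ∀ n : ℕ, ∃ S : Finset (List U), (∃ S : Finset (List U), (∀ w ∈ S, w.length = n) ∧
      {x | cnt T (cellU T (g.1 : Set (List U))) n x ≤ ⌊ε * n⌋₊} ⊆ cellU T (S : Set (List U)) ∧
      (S.card : ℝ) ≤ Real.exp ((a + 5 / 2 * t) * n)) → ((∀ w ∈ S, w.length = n) ∧
      {x | cnt T (cellU T (g.1 : Set (List U))) n x ≤ ⌊ε * n⌋₊} ⊆ cellU T (S : Set (List U)) ∧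
      (S.card : ℝ) ≤ Real.exp ((a + 5 / 2 * t) * n)) := by
      intro n
      by_cases hS : ∃ S : Finset (List U), (∀ w ∈ S, w.length = n) ∧
        {x | cnt T (cellU T (g.1 : Set (List U))) n x ≤ ⌊ε * n⌋₊} ⊆ cellU T (S : Set (List U)) ∧
        (S.card : ℝ) ≤ Real.exp ((a + 5 / 2 * t) * n)
      · obtain ⟨S, hS'⟩ := hS
        exact ⟨S, fun _ => hS'⟩
      · exact ⟨∅, fun h => absurd h hS⟩
    choose S hS using this
    have hev' := hev.mono fun n hn => hS n hn
    refine (null_limsup (T := T) (s := a + 3 * t) (a := a + 5 / 2 * t) (by linarith) S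
      (hev'.mono fun n hn => ⟨hn.1, hn.2.2⟩)).mono ?_
    intro x hx
    exact (Frequently.and_eventually hx hev').mono fun n hn => hn.2.2.1 hn.1
  have hN := null_thicken hU.2 (by linarith) (null_iUnion hDn)
  obtain ⟨G, hG1, hG2⟩ := hN 2⁻¹ (by simp)
  have hGo := isOpen_cellU hT hU.1 G
  have herg : ∀ μ ∈ ergodicMeasures T, μ (cellU T G)ᶜ = 0 := by
    intro μ hμ
    obtain ⟨hμp, hμe⟩ := hμ
    obtain ⟨Z, hZm, hZ0, hZN⟩ := exists_null hT hU hne μ hδ0 hδ (s := a + t) (by linarith)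
      (h μ ⟨hμp, hμe⟩)
    obtain ⟨g, hg1, hg2⟩ := exists_good hT hU μ hμe (by linarith) hZm hZ0 hZN hε
    have h0 := cnt_freq μ hμe.toMeasurePreserving (isOpen_cellU hT hU.1 _).measurableSet hε hg2
    have h1 : μ (⋃ g, D g) ≠ 0 := fun h00 =>
      h0 (measure_mono_null (subset_iUnion D ⟨g, hg1⟩) h00)
    have h2 := full_of_pos μ hμe (MeasurableSet.iUnion hDm) h1
    rw [prob_compl_eq_zero_iff hGo.measurableSet]
    refine le_antisymm prob_le_one ?_
    rw [← h2]
    exact measure_mono hG1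
  have hinv := null_of_ergodic hT hGo.isClosed_compl herg
  obtain ⟨g, hmono, hgG, hgU⟩ := exhaust T G
  have hm : ∃ m : ℕ, ∀ n : ℕ, ∀ x : X, m ≤ n → 0 < n →
      (cnt T (cellU T (g m : Set (List U))) n x : ℝ) < ε * n := by
    by_contra hcon
    push Not at hcon
    obtain ⟨ν, hν, hν0⟩ := exists_inv hT (fun m => cellU T (g m : Set (List U)))
      (fun m => isOpen_cellU hT hU.1 _) hmono hε hcon
    rw [hgU] at hν0
    exact hν0 (hinv ν hν)
  obtain ⟨m, hm⟩ := hm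
  have hev := count_cover' T hU.2 hne (a + 3 * t) (by linarith) (g m)
    (sum_le_half hG2 (g m) (hgG m)) hε (b := b) (by rw [← hκ, hεκ, ht]; linarith)
  refine limsup_le_of_le (h := ?_)
  filter_upwards [hev, eventually_ge_atTop m, eventually_gt_atTop 0] with n hn hmn hn0
  obtain ⟨S, hS1, hS2, hS3⟩ := hn
  have hfull : cellU T (S : Set (List U)) = univ := by
    refine univ_subset_iff.1 (subset_trans ?_ hS2)
    intro x _
    exact Nat.le_floor (hm n x hmn hn0).le
  have hle := coverNum_le T S hS1 hfull
  have hle' : (coverNum (dynRefine T U n) : ℝ) ≤ Real.exp (b * n) :=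
    le_trans (by exact_mod_cast hle) hS3
  have hn1 : (0:ℝ) < n := by exact_mod_cast hn0
  have : Real.log (coverNum (dynRefine T U n)) / n ≤ b := by
    rw [div_le_iff₀ hn1]
    rcases Nat.eq_zero_or_pos (coverNum (dynRefine T U n)) with h0 | h0
    · rw [h0]; simp
      have : 0 < b := by linarith
      positivity
    · rw [Real.log_le_iff_le_exp (by exact_mod_cast h0)]
      exact hle'
  exact_mod_cast this

end ShapiraAux

section Theorems

variable [MetricSpace X] [CompactSpace X] [Nonempty X] [MeasurableSpace X] [BorelSpace X]

/-- Local variational principle for the topological entropy of a finite open cover in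
terms of Shapira's entropy (Theorem 2.4): `h_top(U, T) = sup_{μ ergodic} h_μ^S(U, δ)`.
Since the limit defining `h_top(U, T)` exists, it is expressed here as a `limsup`. -/
theorem coverEnt_eq_iSup_shapiraEnt (T : X → X) (hT : IsHomeomorph T)
    (U : Finset (Set X)) (hU : IsFiniteOpenCover U)
    (δ : ℝ) (hδ : δ ∈ Set.Ioo (0:ℝ) 1) :
    limsup (fun n : ℕ => ((Real.log (coverNum (dynRefine T U n)) / n : ℝ) : EReal)) atTop
      = ⨆ μ ∈ ergodicMeasures T, shapiraEnt T μ U δ := by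
  have hne : U.Nonempty := by
    obtain ⟨u, -⟩ := ShapiraAux.cover_letter hU.2 (Classical.arbitrary X)
    exact ⟨u, u.2⟩
  apply le_antisymm
  · have h0 : (0 : EReal) ≤ ⨆ μ ∈ ergodicMeasures T, shapiraEnt T μ U δ := by
      obtain ⟨μ, hμ⟩ := ShapiraAux.exists_ergodic hT.continuous
      refine le_trans ?_ (le_iSup₂ (f := fun μ (_ : μ ∈ ergodicMeasures T) =>
        shapiraEnt T μ U δ) μ hμ)
      refine le_limsup_of_frequently_le (Eventually.frequently (Eventually.of_forall fun n => ?_))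
      have : (0:ℝ) ≤ Real.log (shapiraNum T μ U n δ) / n :=
        div_nonneg (Real.log_natCast_nonneg _) (Nat.cast_nonneg _)
      exact_mod_cast this
    refine EReal.le_of_forall_lt_iff_le.1 fun z hz => ?_
    obtain ⟨a, ha1, ha2⟩ := EReal.lt_iff_exists_real_btwn.1 hz
    refine ShapiraAux.main_bound hT.continuous hU hne hδ.1 hδ.2.le (a := a) ?_ ?_ ?_
    · exact_mod_cast h0.trans ha1.le
    · exact_mod_cast ha2
    · intro μ hμ
      exact lt_of_le_of_lt (le_iSup₂ (f := fun μ (_ : μ ∈ ergodicMeasures T) =>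
        shapiraEnt T μ U δ) μ hμ) ha1
  · refine iSup₂_le fun μ hμ => ?_
    have := hμ.1
    refine limsup_le_limsup (Eventually.of_forall fun n => ?_)
    have hle := ShapiraAux.shapiraNum_le T hU.2 hne μ hδ.2.le n
    have : Real.log (shapiraNum T μ U n δ) / n ≤ Real.log (coverNum (dynRefine T U n)) / n := by
      apply div_le_div_of_nonneg_right _ (Nat.cast_nonneg n)
      rcases Nat.eq_zero_or_pos (shapiraNum T μ U n δ) with h0 | h0
      · rw [h0]; simpa using Real.log_natCast_nonneg _
      · exact Real.log_le_log (by exact_mod_cast h0) (by exact_mod_cast hle)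
    exact EReal.coe_le_coe_iff.2 this

end Theorems
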